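/- If I is an unmixed ass-decomposable monomial ideal in R = K[x_1,…,x_n], then R/I is Cohen-Macaulay. -/

import Mathlib

open MvPolynomial

namespace Paper

/-- The depth of a module `M` with respect to an ideal `J`: the supremum of lengths of
`M`-regular sequences consisting of elements of `J`. -/
noncomputable def depth {A : Type} [CommRing A] (J : Ideal A)
    (M : Type) [AddCommGroup M] [Module A M] : ℕ∞ :=
  sSup {k : ℕ∞ | ∃ rs : List A, (rs.length : ℕ∞) = k ∧ (∀ r ∈ rs, r ∈ J) ∧
    RingTheory.Sequence.IsRegular M rs}

/-- The irrelevant maximal ideal `𝔪 = (x_1, …, x_n)` of `K[x_1, …, x_n]`. -/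
noncomputable def mIdeal (n : ℕ) (K : Type) [Field K] : Ideal (MvPolynomial (Fin n) K) :=
  Ideal.span (Set.range X)

/-- The Krull dimension of a module, `dim M = dim (A / ann M)`. -/
noncomputable def mdim (A : Type) [CommRing A] (M : Type) [AddCommGroup M] [Module A M] :
    WithBot ℕ∞ :=
  ringKrullDim (A ⧸ Module.annihilator A M)

/-- A module over `K[x_1, …, x_n]` is Cohen-Macaulay if its depth with respect to the
irrelevant maximal ideal equals its Krull dimension. -/
def IsCMMod (n : ℕ) (K : Type) [Field K] (M : Type) [AddCommGroup M]
    [Module (MvPolynomial (Fin n) K) M] : Prop :=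
  (depth (mIdeal n K) M : WithBot ℕ∞) = mdim (MvPolynomial (Fin n) K) M

/-- A module over `K[x_1, …, x_n]` is sequentially Cohen-Macaulay if it admits a finite
filtration `0 = M_0 ⊂ M_1 ⊂ ⋯ ⊂ M_r = M` with Cohen-Macaulay quotients of strictly
increasing dimensions. -/
def IsSeqCMMod (n : ℕ) (K : Type) [Field K] (M : Type) [AddCommGroup M]
    [Module (MvPolynomial (Fin n) K) M] : Prop :=
  ∃ (r : ℕ) (f : Fin (r + 1) → Submodule (MvPolynomial (Fin n) K) M),
    f 0 = ⊥ ∧ f (Fin.last r) = ⊤ ∧ StrictMono f ∧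
    (∀ i : Fin r,
      IsCMMod n K (↥(f i.succ) ⧸ Submodule.comap (f i.succ).subtype (f i.castSucc))) ∧
    ∀ i j : Fin r, i < j →
      mdim (MvPolynomial (Fin n) K)
          (↥(f i.succ) ⧸ Submodule.comap (f i.succ).subtype (f i.castSucc)) <
        mdim (MvPolynomial (Fin n) K)
          (↥(f j.succ) ⧸ Submodule.comap (f j.succ).subtype (f j.castSucc))

/-- Height of an ideal (meaningful for prime ideals). -/
noncomputable def htP {A : Type} [CommRing A] (𝔭 : Ideal A) : ℕ∞ :=
  ⨆ (h : 𝔭.IsPrime), Order.height (⟨𝔭, h⟩ : PrimeSpectrum A)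

/-- The big height of `I`: the maximum of the heights of the associated primes of `I`. -/
noncomputable def bigh {A : Type} [CommRing A] (I : Ideal A) : ℕ∞ :=
  ⨆ 𝔭 ∈ associatedPrimes A (A ⧸ I), htP 𝔭

/-- A monomial ideal: an ideal generated by monomials. -/
def IsMonomialIdeal {n : ℕ} {K : Type} [Field K] (I : Ideal (MvPolynomial (Fin n) K)) : Prop :=
  ∃ S : Set (Fin n →₀ ℕ), I = Ideal.span ((fun a => monomial a (1 : K)) '' S)

/-- A squarefree monomial ideal: an ideal generated by squarefree monomials. -/
def IsSquarefreeMonomialIdeal {n : ℕ} {K : Type} [Field K]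
    (I : Ideal (MvPolynomial (Fin n) K)) : Prop :=
  ∃ S : Set (Fin n →₀ ℕ), (∀ a ∈ S, ∀ i, a i ≤ 1) ∧
    I = Ideal.span ((fun a => monomial a (1 : K)) '' S)

/-- An ideal `I` is unmixed if `dim A/I = dim A/𝔭` for every associated prime `𝔭` of `I`. -/
def IsUnmixed {A : Type} [CommRing A] (I : Ideal A) : Prop :=
  ∀ 𝔭 ∈ associatedPrimes A (A ⧸ I), ringKrullDim (A ⧸ I) = ringKrullDim (A ⧸ 𝔭)

/-- ass-decomposable ideals: `I` is ass-decomposable if it is primary, or there are a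
variable `x_i ∉ √I` and `k ≥ 1` with `ass(I + (x_i^k)) = {𝔭 ∈ ass(I) : x_i ∈ 𝔭}` such
that `I + (x_i^k)` and `I : x_i^k` are both ass-decomposable. -/
inductive IsAssDecomposable {n : ℕ} {K : Type} [Field K] :
    Ideal (MvPolynomial (Fin n) K) → Prop
  | primary {I : Ideal (MvPolynomial (Fin n) K)} (h : I.IsPrimary) : IsAssDecomposable I
  | step {I : Ideal (MvPolynomial (Fin n) K)} (i : Fin n) (k : ℕ) (hk : 1 ≤ k)
      (hx : X i ∉ I.radical)
      (hass : associatedPrimes (MvPolynomial (Fin n) K)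
          (MvPolynomial (Fin n) K ⧸ (I + Ideal.span {(X i : MvPolynomial (Fin n) K) ^ k})) =
        {𝔭 ∈ associatedPrimes (MvPolynomial (Fin n) K) (MvPolynomial (Fin n) K ⧸ I) |
          (X i : MvPolynomial (Fin n) K) ∈ 𝔭})
      (h1 : IsAssDecomposable (I + Ideal.span {(X i : MvPolynomial (Fin n) K) ^ k}))
      (h2 : IsAssDecomposable (I.colon (Ideal.span {(X i : MvPolynomial (Fin n) K) ^ k}))) :
      IsAssDecomposable I

/-! Fix the dimension `d` of `R ⧸ I`. The elementary symmetric polynomials `e_d, …, e_1` form a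
regular sequence on `R ⧸ I`, the same sequence for all the ideals in question, so that regularity
can be glued: by the exact sequence `0 → R ⧸ (I : x) → R ⧸ I → R ⧸ (I + (x)) → 0`, a sequence which
is weakly regular on both ends is weakly regular in the middle.

Along an ass-decomposition, the associated primes of `I : x_i ^ k` and of `I + (x_i ^ k)` are
associated primes of `I`, so unmixedness is inherited and the claim reduces to primary monomial
ideals. For these, colons by and sums with variables of the radical are again primary with the same
radical or the unit ideal, and Noetherian induction reduces to the primes `P_B = (x_j : j ∉ B)`
with `d` elements in `B`. Modulo `P_B` the polynomial `e_d` is the product of the `x_j`, `j ∈ B`,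
which is a nonzerodivisor. Its quotient is filtered by the rings `R ⧸ P_{B ∖ {j}}`, on which
`e_{d-1}, …, e_1` is weakly regular by induction on `d`.
-/

section WeaklyRegular

open RingTheory.Sequence Pointwise

variable {A : Type*} [CommRing A]

theorem isSMulRegular_prod {M ι : Type*} [AddCommGroup M] [Module A M] {s : Finset ι} {x : ι → A}
    (h : ∀ i ∈ s, IsSMulRegular M (x i)) : IsSMulRegular M (∏ i ∈ s, x i) :=
  Finset.prod_induction x (IsSMulRegular M) (fun _ _ ↦ .mul) (.one M) h

theorem isSMulRegular_quotient_of_isPrimary {Q : Ideal A} (hQ : Q.IsPrimary) {x : A}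
    (hx : x ∉ Q.radical) : IsSMulRegular (A ⧸ Q) x := by
  rw [isSMulRegular_quotient_iff_mem_of_smul_mem]
  intro a ha
  rw [smul_eq_mul, mul_comm] at ha
  exact ((Ideal.isPrimary_iff.1 hQ).2 ha).resolve_right hx

theorem isWeaklyRegular_of_exact {M' M M'' : Type*} [AddCommGroup M'] [Module A M']
    [AddCommGroup M] [Module A M] [AddCommGroup M''] [Module A M'']
    {f : M' →ₗ[A] M} {g : M →ₗ[A] M''} (hf : Function.Injective f) (hfg : Function.Exact f g)
    (hg : Function.Surjective g) {rs : List A} (h' : IsWeaklyRegular M' rs)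
    (h'' : IsWeaklyRegular M'' rs) : IsWeaklyRegular M rs := by
  induction rs generalizing M' M M'' with
  | nil => exact .nil A M
  | cons r rs ih =>
    rw [isWeaklyRegular_cons_iff] at h' h'' ⊢
    have hinj : Function.Injective (QuotSMulTop.map r f) := by
      have hexact : Function.Exact (0 : M' →ₗ[A] M') f := by
        simpa [LinearMap.exact_zero_iff_injective] using hf
      have := QuotSMulTop.map_first_exact_on_four_term_exact_of_isSMulRegular_last
        hexact hfg h''.1
      simpa [LinearMap.exact_zero_iff_injective] using this
    exact ⟨isSMulRegular_of_range_eq_ker hf hfg.linearMap_ker_eq.symm h'.1 h''.1,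
      ih hinj (QuotSMulTop.map_exact r hfg hg) (QuotSMulTop.map_surjective r hg) h'.2 h''.2⟩

theorem isWeaklyRegular_of_subsingleton (M : Type*) [AddCommGroup M] [Module A M]
    [Subsingleton M] (rs : List A) : IsWeaklyRegular M rs := by
  induction rs generalizing M with
  | nil => exact .nil A M
  | cons r rs ih =>
    exact (isWeaklyRegular_cons_iff M r rs).2 ⟨Function.injective_of_subsingleton _, ih _⟩

theorem comap_mulRight_eq_colon (I : Ideal A) (x : A) :
    Submodule.comap (LinearMap.mulRight A x) I = I.colon (Ideal.span {x} : Set A) :=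
  Submodule.ext fun _ ↦ Ideal.mem_colon_span_singleton.symm

/-- Multiplication by `x`, as the injection `A ⧸ (I : x) → A ⧸ I` whose cokernel is
`A ⧸ (I + (x))`. -/
def colonMap (I : Ideal A) (x : A) : (A ⧸ I.colon (Ideal.span {x} : Set A)) →ₗ[A] A ⧸ I :=
  Submodule.mapQ _ _ (LinearMap.mulRight A x) (comap_mulRight_eq_colon I x).ge

theorem colonMap_injective (I : Ideal A) (x : A) : Function.Injective (colonMap I x) := by
  rw [← LinearMap.ker_eq_bot, colonMap, Submodule.ker_mapQ, comap_mulRight_eq_colon,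
    Submodule.mkQ_map_self]

theorem associatedPrimes_quotient_colon_subset (I : Ideal A) (x : A) :
    associatedPrimes A (A ⧸ I.colon (Ideal.span {x} : Set A)) ⊆ associatedPrimes A (A ⧸ I) :=
  associatedPrimes.subset_of_injective (colonMap_injective I x)

theorem lt_colon_span_singleton {A : Type*} [CommRing A] {I : Ideal A} {x : A} (hx : x ∉ I)
    (hrad : x ∈ I.radical) : I < I.colon (Ideal.span {x} : Set A) := by
  refine Ideal.le_colon.lt_of_not_ge fun hle ↦ hx ?_
  have hreg : IsSMulRegular (A ⧸ I) x := by
    rw [isSMulRegular_quotient_iff_mem_of_smul_mem]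
    intro a ha
    exact hle (Ideal.mem_colon_span_singleton.2 (mul_comm a x ▸ ha))
  obtain ⟨m, hm⟩ := hrad
  have hone := (isSMulRegular_quotient_iff_mem_of_smul_mem I (x ^ m)).1 (hreg.pow m) 1
  rw [smul_eq_mul, mul_one] at hone
  exact (Ideal.eq_top_iff_one I).2 (hone hm) ▸ Submodule.mem_top

theorem colonMap_exact (I : Ideal A) (x : A) :
    Function.Exact (colonMap I x)
      (Submodule.factor (le_sup_left : I ≤ I ⊔ Ideal.span {x})) := by
  rw [LinearMap.exact_iff, colonMap, Submodule.range_mapQ, Submodule.factor, Submodule.ker_mapQ,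
    Submodule.comap_id, Submodule.map_sup, Submodule.mkQ_map_self, bot_sup_eq]
  congr 1
  ext a
  simp [Ideal.mem_span_singleton', eq_comm]

theorem isWeaklyRegular_quotient_of_colon_of_sup {I : Ideal A} {x : A} {rs : List A}
    (hcolon : IsWeaklyRegular (A ⧸ I.colon (Ideal.span {x} : Set A)) rs)
    (hsup : IsWeaklyRegular (A ⧸ (I ⊔ Ideal.span {x})) rs) : IsWeaklyRegular (A ⧸ I) rs :=
  isWeaklyRegular_of_exact (colonMap_injective I x) (colonMap_exact I x)
    (Submodule.factor_surjective _) hcolon hsup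

theorem ideal_smul_top_quotient (I J : Ideal A) :
    (J • ⊤ : Submodule A (A ⧸ I)) = Submodule.map I.mkQ J := by
  rw [← I.range_mkQ, LinearMap.range_eq_map, ← Submodule.map_smul'', smul_eq_mul, Ideal.mul_top]

theorem isWeaklyRegular_quotient_cons_iff {I : Ideal A} {r : A} {rs : List A} :
    IsWeaklyRegular (A ⧸ I) (r :: rs) ↔
      IsSMulRegular (A ⧸ I) r ∧ IsWeaklyRegular (A ⧸ (I ⊔ Ideal.span {r})) rs := by
  have hsmul : r • (⊤ : Submodule A (A ⧸ I)) = Submodule.map I.mkQ (Ideal.span {r}) := by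
    rw [← Submodule.ideal_span_singleton_smul, ideal_smul_top_quotient]
  let e : QuotSMulTop r (A ⧸ I) ≃ₗ[A] A ⧸ (I ⊔ Ideal.span {r}) :=
    Submodule.quotEquivOfEq _ _ hsmul ≪≫ₗ
      Submodule.quotientQuotientEquivQuotientSup I (Ideal.span {r})
  rw [isWeaklyRegular_cons_iff, e.isWeaklyRegular_congr]

theorem isWeaklyRegular_quotient_cons_congr {I : Ideal A} {a b : A} (h : a - b ∈ I)
    {rs : List A} : IsWeaklyRegular (A ⧸ I) (a :: rs) ↔ IsWeaklyRegular (A ⧸ I) (b :: rs) := by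
  have hsup : I ⊔ Ideal.span {a} = I ⊔ Ideal.span {b} := by
    simp only [← Ideal.comap_map_quotientMk, Ideal.map_span, Set.image_singleton,
      Ideal.Quotient.eq.2 h]
  have hreg : IsSMulRegular (A ⧸ I) a ↔ IsSMulRegular (A ⧸ I) b := by
    rw [← isSMulRegular_algebraMap_iff (A ⧸ I), ← isSMulRegular_algebraMap_iff (r := b) (A ⧸ I),
      Ideal.Quotient.algebraMap_eq, Ideal.Quotient.eq.2 h]
  rw [isWeaklyRegular_quotient_cons_iff, isWeaklyRegular_quotient_cons_iff, hsup, hreg]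

theorem isRegular_quotient_of_le {I J : Ideal A} {rs : List A} (hJ : J ≠ ⊤) (hIJ : I ≤ J)
    (hrs : ∀ r ∈ rs, r ∈ J) (h : IsWeaklyRegular (A ⧸ I) rs) : IsRegular (A ⧸ I) rs := by
  refine ⟨h, fun htop ↦ hJ ?_⟩
  rw [ideal_smul_top_quotient, eq_comm, Submodule.map_mkQ_eq_top] at htop
  exact top_le_iff.1 (htop ▸ sup_le hIJ (Ideal.span_le.2 hrs))

theorem colon_sup_span_mul {I : Ideal A} {x : A} (hx : IsSMulRegular (A ⧸ I) x) (y : A) :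
    (I ⊔ Ideal.span {x * y}).colon (Ideal.span {x} : Set A) = I ⊔ Ideal.span {y} := by
  rw [isSMulRegular_quotient_iff_mem_of_smul_mem] at hx
  ext a
  simp only [Ideal.mem_colon_span_singleton, sup_comm I, Ideal.mem_span_singleton_sup]
  constructor
  · rintro ⟨c, b, hb, hab⟩
    refine ⟨c, a - c * y, hx _ ?_, by ring⟩
    rwa [smul_eq_mul, show x * (a - c * y) = b by linear_combination -hab]
  · rintro ⟨c, b, hb, rfl⟩
    exact ⟨c, b * x, I.mul_mem_right x hb, by ring⟩

theorem isWeaklyRegular_quotient_sup_span_prod {ι : Type*} {I : Ideal A} {rs : List A}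
    (x : ι → A) (s : Finset ι) (hx : ∀ i ∈ s, IsSMulRegular (A ⧸ I) (x i))
    (h : ∀ i ∈ s, IsWeaklyRegular (A ⧸ (I ⊔ Ideal.span {x i})) rs) :
    IsWeaklyRegular (A ⧸ (I ⊔ Ideal.span {∏ i ∈ s, x i})) rs := by
  classical
  induction s using Finset.induction_on with
  | empty =>
    rw [Finset.prod_empty, Ideal.span_singleton_one, sup_top_eq]
    exact isWeaklyRegular_of_subsingleton _ rs
  | insert j s hj ih =>
    rw [Finset.forall_mem_insert] at hx h
    rw [Finset.prod_insert hj]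
    have hle : Ideal.span {x j * ∏ i ∈ s, x i} ≤ Ideal.span {x j} :=
      Ideal.span_singleton_le_span_singleton.2 (dvd_mul_right _ _)
    apply isWeaklyRegular_quotient_of_colon_of_sup (x := x j)
    · rw [colon_sup_span_mul hx.1]
      exact ih hx.2 h.2
    · rw [sup_assoc, sup_eq_right.2 hle]
      exact h.1

end WeaklyRegular

section Depth

open RingTheory.Sequence

theorem length_le_supportDim {A : Type*} [CommRing A] {M : Type*} [AddCommGroup M] [Module A M]
    [Module.Finite A M] {rs : List A} (h : IsRegular M rs) :
    (rs.length : WithBot ℕ∞) ≤ Module.supportDim A M := by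
  induction rs generalizing M with
  | nil =>
    have := h.nontrivial
    obtain ⟨a, ha⟩ := WithBot.ne_bot_iff_exists.1 (Module.supportDim_ne_bot_of_nontrivial A M)
    simp [← ha]
  | cons r rs ih =>
    rw [isRegular_cons_iff] at h
    calc ((r :: rs).length : WithBot ℕ∞) = rs.length + 1 := by simp
      _ ≤ Module.supportDim A (QuotSMulTop r M) + 1 := by gcongr; exact ih h.2
      _ ≤ Module.supportDim A M :=
        Module.supportDim_quotSMulTop_succ_le_of_notMem_minimalPrimes
          fun _ ↦ h.1.notMem_of_mem_minimalPrimes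

theorem depth_quotient_le {A : Type} [CommRing A] (I J : Ideal A) {d : ℕ∞}
    (hd : ringKrullDim (A ⧸ I) = d) :
    depth J (A ⧸ I) ≤ d := by
  refine sSup_le ?_
  rintro _ ⟨rs, rfl, -, hrs⟩
  have := length_le_supportDim hrs
  rw [Module.supportDim_quotient_eq_ringKrullDim, hd] at this
  exact_mod_cast this

end Depth

section Monomials

variable {σ R : Type*}

theorem monomial_mem_of_le [CommSemiring R] {I : Ideal (MvPolynomial σ R)}
    {a b : σ →₀ ℕ} (ha : monomial a (1 : R) ∈ I) (hab : a ≤ b) (c : R) : monomial b c ∈ I :=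
  Ideal.mem_of_dvd I (monomial_dvd_monomial.2 ⟨.inr hab, one_dvd c⟩) ha

theorem isSMulRegular_monomial {M : Type*} [CommRing R] [AddCommGroup M]
    [Module (MvPolynomial σ R) M] {a : σ →₀ ℕ}
    (h : ∀ j ∈ a.support, IsSMulRegular M (X j : MvPolynomial σ R)) :
    IsSMulRegular M (monomial a (1 : R)) := by
  rw [monomial_eq, C_1, one_mul]
  exact isSMulRegular_prod fun j hj ↦ (h j hj).pow _

end Monomials

section CoordinatePrimes

variable {σ R : Type*} [CommRing R]

/-- The coordinate prime `P_B = (x_j : j ∉ B)`, indexed by the variables it does *not* contain, so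
that the quotient by it is the polynomial ring in the variables of `B`. -/
noncomputable def coordPrime (R : Type*) [CommRing R] (B : Finset σ) : Ideal (MvPolynomial σ R) :=
  Ideal.span (X '' (↑B : Set σ)ᶜ)

theorem coordPrime_le_iff {B : Finset σ} {I : Ideal (MvPolynomial σ R)} :
    coordPrime R B ≤ I ↔ ∀ j ∉ B, X j ∈ I := by
  simp [coordPrime, Ideal.span_le, Set.subset_def]

theorem X_mem_coordPrime {B : Finset σ} {j : σ} (hj : j ∉ B) : X j ∈ coordPrime R B :=
  coordPrime_le_iff.1 le_rfl j hj

theorem coordPrime_eq_ker_killCompl (B : Finset σ) :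
    coordPrime R B = RingHom.ker (killCompl (R := R) (Subtype.val_injective (p := (· ∈ B)))) := by
  ext f
  rw [coordPrime, mem_ideal_span_X_image, RingHom.mem_ker, MvPolynomial.ext_iff]
  simp only [coeff_killCompl, coeff_zero]
  constructor
  · intro h a
    by_contra ha
    obtain ⟨i, hi, hai⟩ := h _ (mem_support_iff.2 ha)
    exact hai (Finsupp.mapDomain_of_notMem_range _ _ (by simpa using hi))
  · intro h a ha
    by_contra! hB
    obtain ⟨b, rfl⟩ :=
      (Finsupp.mem_range_mapDomain_iff _ (Subtype.val_injective (p := (· ∈ B))) a).2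
        fun i hi ↦ hB i (by simpa using hi)
    exact mem_support_iff.1 ha (h b)

theorem killCompl_surjective {τ : Type*} {f : τ → σ} (hf : Function.Injective f) :
    Function.Surjective (killCompl (R := R) hf) :=
  fun p ↦ ⟨rename f p, killCompl_rename_app hf p⟩

theorem isPrime_coordPrime [IsDomain R] (B : Finset σ) : (coordPrime R B).IsPrime := by
  rw [coordPrime_eq_ker_killCompl]
  exact RingHom.ker_isPrime _

theorem X_mem_coordPrime_iff [Nontrivial R] {B : Finset σ} {j : σ} :
    X j ∈ coordPrime R B ↔ j ∉ B := by
  simp [coordPrime, mem_ideal_span_X_image, support_X, Finsupp.single_apply_ne_zero]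

theorem ringKrullDim_quotient_coordPrime [IsNoetherianRing R] (B : Finset σ) :
    ringKrullDim (MvPolynomial σ R ⧸ coordPrime R B) = ringKrullDim R + B.card := by
  rw [coordPrime_eq_ker_killCompl, ringKrullDim_eq_of_ringEquiv
      (Ideal.quotientKerAlgEquivOfSurjective (killCompl_surjective _)).toRingEquiv,
    MvPolynomial.ringKrullDim_of_isNoetherianRing, Nat.card_eq_fintype_card, Fintype.card_coe]

theorem coordPrime_sup_span_X [DecidableEq σ] (B : Finset σ) (b : σ) :
    coordPrime R B ⊔ Ideal.span {X b} = coordPrime R (B.erase b) := by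
  rw [coordPrime, coordPrime, ← Ideal.span_union, ← Set.image_singleton, ← Set.image_union,
    Finset.coe_erase, Set.compl_sdiff, Set.union_comm]

theorem prod_X_mem_coordPrime {B t : Finset σ} (h : ¬ t ⊆ B) :
    ∏ j ∈ t, X j ∈ coordPrime R B := by
  obtain ⟨j, hj, hjB⟩ := Finset.not_subset.1 h
  exact Ideal.mem_of_dvd _ (Finset.dvd_prod_of_mem _ hj) (X_mem_coordPrime hjB)

variable [Fintype σ]

theorem esymm_mem_coordPrime {B : Finset σ} {k : ℕ} (hk : B.card < k) :
    esymm σ R k ∈ coordPrime R B := by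
  refine Ideal.sum_mem _ fun t ht ↦ prod_X_mem_coordPrime fun htB ↦ ?_
  rw [Finset.mem_powersetCard_univ] at ht
  exact hk.not_ge (ht ▸ Finset.card_le_card htB)

theorem esymm_card_sub_prod_mem_coordPrime (B : Finset σ) :
    esymm σ R B.card - ∏ j ∈ B, X j ∈ coordPrime R B := by
  classical
  rw [esymm, ← Finset.add_sum_erase _ _ (Finset.mem_powersetCard_univ.2 rfl),
    add_sub_cancel_left]
  refine Ideal.sum_mem _ fun t ht ↦ prod_X_mem_coordPrime fun htB ↦ ?_
  rw [Finset.mem_erase, Finset.mem_powersetCard_univ] at ht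
  exact ht.1 (Finset.eq_of_subset_of_card_le htB ht.2.ge)

/-- The sequence `e_d, e_{d-1}, …, e_1` of elementary symmetric polynomials, a system of
parameters modulo every coordinate prime of dimension `d` at once. -/
noncomputable def esymmSeq (σ R : Type*) [CommRing R] [Fintype σ] : ℕ → List (MvPolynomial σ R)
  | 0 => []
  | d + 1 => esymm σ R (d + 1) :: esymmSeq σ R d

theorem length_esymmSeq (d : ℕ) : (esymmSeq σ R d).length = d := by
  induction d with
  | zero => rfl
  | succ d ih => rw [esymmSeq, List.length_cons, ih]

theorem mem_coordPrime_empty_of_mem_esymmSeq {d : ℕ} {r : MvPolynomial σ R}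
    (hr : r ∈ esymmSeq σ R d) : r ∈ coordPrime R (∅ : Finset σ) := by
  induction d with
  | zero => simp [esymmSeq] at hr
  | succ d ih =>
    rcases List.mem_cons.1 hr with rfl | hr
    · exact esymm_mem_coordPrime d.succ_pos
    · exact ih hr

open RingTheory.Sequence

theorem isWeaklyRegular_esymmSeq_coordPrime [IsDomain R] (B : Finset σ) :
    IsWeaklyRegular (MvPolynomial σ R ⧸ coordPrime R B) (esymmSeq σ R B.card) := by
  classical
  induction hd : B.card generalizing B with
  | zero => exact .nil _ _
  | succ d ih =>
    have hprime := isPrime_coordPrime (R := R) B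
    have hX : ∀ j ∈ B,
        IsSMulRegular (MvPolynomial σ R ⧸ coordPrime R B) (X j : MvPolynomial σ R) := by
      intro j hj
      apply isSMulRegular_quotient_of_isPrimary hprime.isPrimary
      rw [hprime.radical, X_mem_coordPrime_iff]
      exact not_not_intro hj
    have hsub := hd ▸ esymm_card_sub_prod_mem_coordPrime (R := R) B
    rw [esymmSeq, isWeaklyRegular_quotient_cons_congr hsub, isWeaklyRegular_quotient_cons_iff]
    refine ⟨isSMulRegular_prod hX, isWeaklyRegular_quotient_sup_span_prod _ B hX fun j hj ↦ ?_⟩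
    rw [coordPrime_sup_span_X]
    exact ih _ (by rw [Finset.card_erase_of_mem hj, hd, Nat.add_sub_cancel])

end CoordinatePrimes

section MonomialIdeals

variable {n : ℕ} {K : Type} [Field K] {I J : Ideal (MvPolynomial (Fin n) K)}

theorem IsMonomialIdeal.mem_iff (hI : IsMonomialIdeal I) {f : MvPolynomial (Fin n) K} :
    f ∈ I ↔ ∀ a ∈ f.support, monomial a (1 : K) ∈ I := by
  constructor
  · obtain ⟨S, rfl⟩ := hI
    intro hf a ha
    rw [mem_ideal_span_monomial_image] at hf
    obtain ⟨s, hs, hsa⟩ := hf a ha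
    refine monomial_mem_of_le (a := s) ?_ hsa 1
    exact Ideal.subset_span ⟨s, hs, rfl⟩
  · intro h
    rw [f.as_sum]
    exact I.sum_mem fun a ha ↦ monomial_mem_of_le (h a ha) le_rfl _

theorem isMonomialIdeal_of_forall_mem_support
    (h : ∀ f ∈ I, ∀ a ∈ f.support, monomial a (1 : K) ∈ I) : IsMonomialIdeal I := by
  refine ⟨{a | monomial a 1 ∈ I}, le_antisymm (fun f hf ↦ ?_) (Ideal.span_le.2 ?_)⟩
  · exact mem_ideal_span_monomial_image.2 fun a ha ↦ ⟨a, h f hf a ha, le_rfl⟩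
  · rintro _ ⟨a, ha, rfl⟩
    exact ha

theorem isMonomialIdeal_span_X_pow (i : Fin n) (k : ℕ) :
    IsMonomialIdeal (Ideal.span {(X i : MvPolynomial (Fin n) K) ^ k}) :=
  ⟨{Finsupp.single i k}, by rw [Set.image_singleton, X_pow_eq_monomial]⟩

theorem IsMonomialIdeal.sup (hI : IsMonomialIdeal I) (hJ : IsMonomialIdeal J) :
    IsMonomialIdeal (I ⊔ J) := by
  obtain ⟨S, rfl⟩ := hI
  obtain ⟨T, rfl⟩ := hJ
  exact ⟨S ∪ T, by rw [Set.image_union, Ideal.span_union]⟩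

theorem IsMonomialIdeal.monomial_mem_sup (hI : IsMonomialIdeal I) (hJ : IsMonomialIdeal J)
    {a : Fin n →₀ ℕ} :
    monomial a (1 : K) ∈ I ⊔ J ↔ monomial a (1 : K) ∈ I ∨ monomial a (1 : K) ∈ J := by
  classical
  obtain ⟨S, rfl⟩ := hI
  obtain ⟨T, rfl⟩ := hJ
  rw [← Ideal.span_union, ← Set.image_union]
  simp only [mem_ideal_span_monomial_image, support_monomial, one_ne_zero, if_false,
    Finset.mem_singleton, forall_eq, Set.mem_union, or_and_right, exists_or]

theorem IsMonomialIdeal.colon_span_X_pow (hI : IsMonomialIdeal I) (i : Fin n) (k : ℕ) :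
    IsMonomialIdeal (I.colon (Ideal.span {(X i : MvPolynomial (Fin n) K) ^ k} : Set _)) := by
  refine isMonomialIdeal_of_forall_mem_support fun f hf a ha ↦ ?_
  rw [Ideal.mem_colon_span_singleton, X_pow_eq_monomial] at hf ⊢
  rw [monomial_mul, mul_one]
  refine hI.mem_iff.1 hf _ ?_
  rwa [mem_support_iff, coeff_mul_monomial, mul_one, ← mem_support_iff]

theorem IsMonomialIdeal.isSMulRegular_X_iff (hI : IsMonomialIdeal I) {l : Fin n} :
    IsSMulRegular (MvPolynomial (Fin n) K ⧸ I) (X l : MvPolynomial (Fin n) K) ↔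
      ∀ a, monomial (Finsupp.single l 1 + a) (1 : K) ∈ I → monomial a (1 : K) ∈ I := by
  rw [isSMulRegular_quotient_iff_mem_of_smul_mem]
  simp only [X, smul_eq_mul]
  constructor
  · intro h a ha
    exact h _ (by rwa [monomial_mul, mul_one])
  · intro h f hf
    refine hI.mem_iff.2 fun a ha ↦ h a (hI.mem_iff.1 hf _ ?_)
    rwa [mem_support_iff, coeff_monomial_mul, one_mul, ← mem_support_iff]

theorem IsMonomialIdeal.isSMulRegular_X_sup (hI : IsMonomialIdeal I) {l j : Fin n} (hlj : l ≠ j)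
    (hl : IsSMulRegular (MvPolynomial (Fin n) K ⧸ I) (X l : MvPolynomial (Fin n) K)) :
    IsSMulRegular (MvPolynomial (Fin n) K ⧸ (I ⊔ Ideal.span {X j}))
      (X l : MvPolynomial (Fin n) K) := by
  have hJ : IsMonomialIdeal (Ideal.span {(X j : MvPolynomial (Fin n) K)}) := by
    simpa only [pow_one] using isMonomialIdeal_span_X_pow (K := K) j 1
  rw [hI.isSMulRegular_X_iff] at hl
  rw [(hI.sup hJ).isSMulRegular_X_iff]
  intro a ha
  rw [hI.monomial_mem_sup hJ, Ideal.mem_span_singleton, X_dvd_monomial] at ha ⊢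
  refine ha.imp (hl a) (Or.imp_right fun haj ↦ ?_)
  rwa [Finsupp.add_apply, Finsupp.single_eq_of_ne' hlj, zero_add] at haj

theorem IsMonomialIdeal.le_mIdeal (hI : IsMonomialIdeal I) (htop : I ≠ ⊤) : I ≤ mIdeal n K := by
  intro f hf
  rw [mIdeal, ← Set.image_univ, mem_ideal_span_X_image]
  intro a ha
  by_contra! h0
  have hone : monomial a (1 : K) ∈ I := hI.mem_iff.1 hf a ha
  rw [show a = 0 from Finsupp.ext fun i ↦ h0 i (Set.mem_univ i), monomial_zero', C_1] at hone
  exact htop ((Ideal.eq_top_iff_one I).2 hone)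

theorem coordPrime_empty : coordPrime K (∅ : Finset (Fin n)) = mIdeal n K := by
  rw [coordPrime, Finset.coe_empty, Set.compl_empty, Set.image_univ, mIdeal]

theorem mIdeal_ne_top : mIdeal n K ≠ ⊤ :=
  coordPrime_empty (K := K) (n := n) ▸ (isPrime_coordPrime _).ne_top

end MonomialIdeals

section CoordPrimary

open RingTheory.Sequence

variable {n : ℕ} {K : Type} [Field K] {B : Finset (Fin n)} {Q : Ideal (MvPolynomial (Fin n) K)}

/-- A monomial ideal modulo which every variable outside `B` is nilpotent and every variable in `B`
is a nonzerodivisor: the `coordPrime K B`-primary monomial ideals, together with the unit ideal,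
which is allowed so that the class is closed under colons. -/
structure IsCoordPrimary (B : Finset (Fin n)) (Q : Ideal (MvPolynomial (Fin n) K)) : Prop where
  isMonomialIdeal : IsMonomialIdeal Q
  X_mem_radical : ∀ j ∉ B, X j ∈ Q.radical
  isSMulRegular_X : ∀ l ∈ B,
    IsSMulRegular (MvPolynomial (Fin n) K ⧸ Q) (X l : MvPolynomial (Fin n) K)

theorem IsCoordPrimary.colon_span_X (hQ : IsCoordPrimary B Q) (j : Fin n) :
    IsCoordPrimary B (Q.colon (Ideal.span {(X j : MvPolynomial (Fin n) K)} : Set _)) where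
  isMonomialIdeal := by simpa only [pow_one] using hQ.isMonomialIdeal.colon_span_X_pow j 1
  X_mem_radical l hl := Ideal.radical_mono Ideal.le_colon (hQ.X_mem_radical l hl)
  isSMulRegular_X l hl := (hQ.isSMulRegular_X l hl).of_injective _ (colonMap_injective Q (X j))

theorem IsCoordPrimary.sup_span_X (hQ : IsCoordPrimary B Q) {j : Fin n} (hj : j ∉ B) :
    IsCoordPrimary B (Q ⊔ Ideal.span {X j}) where
  isMonomialIdeal := hQ.isMonomialIdeal.sup <| by
    simpa only [pow_one] using isMonomialIdeal_span_X_pow (K := K) j 1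
  X_mem_radical l hl := Ideal.radical_mono le_sup_left (hQ.X_mem_radical l hl)
  isSMulRegular_X l hl :=
    hQ.isMonomialIdeal.isSMulRegular_X_sup (ne_of_mem_of_not_mem hl hj) (hQ.isSMulRegular_X l hl)

theorem IsCoordPrimary.le_coordPrime (hQ : IsCoordPrimary B Q) (htop : Q ≠ ⊤) :
    Q ≤ coordPrime K B := by
  intro f hf
  rw [coordPrime, mem_ideal_span_X_image]
  intro a ha
  by_contra! haB
  have hreg : IsSMulRegular (MvPolynomial (Fin n) K ⧸ Q) (monomial a (1 : K)) := by
    refine isSMulRegular_monomial fun j hj ↦ hQ.isSMulRegular_X j ?_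
    by_contra hjB
    exact Finsupp.mem_support_iff.1 hj (haB j hjB)
  rw [isSMulRegular_quotient_iff_mem_of_smul_mem] at hreg
  refine htop ((Ideal.eq_top_iff_one Q).2 (hreg 1 ?_))
  rw [smul_eq_mul, mul_one]
  exact hQ.isMonomialIdeal.mem_iff.1 hf a ha

theorem IsCoordPrimary.radical_eq (hQ : IsCoordPrimary B Q) (htop : Q ≠ ⊤) :
    Q.radical = coordPrime K B :=
  le_antisymm ((isPrime_coordPrime B).radical_le_iff.2 (hQ.le_coordPrime htop))
    (coordPrime_le_iff.2 hQ.X_mem_radical)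

theorem IsCoordPrimary.isWeaklyRegular_esymmSeq (hQ : IsCoordPrimary B Q) :
    IsWeaklyRegular (MvPolynomial (Fin n) K ⧸ Q) (esymmSeq (Fin n) K B.card) := by
  induction Q using WellFoundedGT.induction with
  | ind Q ih =>
  by_cases hX : ∀ j ∉ B, X j ∈ Q
  · rcases eq_or_ne Q ⊤ with rfl | htop
    · exact isWeaklyRegular_of_subsingleton _ _
    · rw [(hQ.le_coordPrime htop).antisymm (coordPrime_le_iff.2 hX)]
      exact isWeaklyRegular_esymmSeq_coordPrime B
  · push Not at hX
    obtain ⟨j, hj, hjQ⟩ := hX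
    have hcolon : Q < Q.colon (Ideal.span {(X j : MvPolynomial (Fin n) K)} : Set _) :=
      lt_colon_span_singleton hjQ (hQ.X_mem_radical j hj)
    have hsup : Q < Q ⊔ Ideal.span {X j} :=
      left_lt_sup.2 (mt (Ideal.span_singleton_le_iff_mem Q).1 hjQ)
    exact isWeaklyRegular_quotient_of_colon_of_sup (ih _ hcolon (hQ.colon_span_X j))
      (ih _ hsup (hQ.sup_span_X hj))

theorem IsMonomialIdeal.exists_isCoordPrimary (hQ : IsMonomialIdeal Q) (hprim : Q.IsPrimary) :
    ∃ B, IsCoordPrimary B Q := by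
  classical
  refine ⟨({j | X j ∉ Q.radical} : Finset (Fin n)), hQ, fun j hj ↦ ?_, fun l hl ↦ ?_⟩
  · rwa [Finset.mem_filter_univ, not_not] at hj
  · exact isSMulRegular_quotient_of_isPrimary hprim ((Finset.mem_filter_univ l).1 hl)

end CoordPrimary

section AssDecomposable

open RingTheory.Sequence

variable {n : ℕ} {K : Type} [Field K] {I : Ideal (MvPolynomial (Fin n) K)}

theorem IsAssDecomposable.ne_top (hI : IsAssDecomposable I) : I ≠ ⊤ := by
  cases hI with
  | primary h => exact (Ideal.isPrimary_iff.1 h).1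
  | step i k _ hx =>
    rintro rfl
    exact hx (Ideal.le_radical Submodule.mem_top)

theorem IsAssDecomposable.isWeaklyRegular_esymmSeq (hdec : IsAssDecomposable I)
    (hmon : IsMonomialIdeal I) {d : ℕ}
    (hdim : ∀ 𝔭 ∈ associatedPrimes (MvPolynomial (Fin n) K) (MvPolynomial (Fin n) K ⧸ I),
      ringKrullDim (MvPolynomial (Fin n) K ⧸ 𝔭) = d) :
    IsWeaklyRegular (MvPolynomial (Fin n) K ⧸ I) (esymmSeq (Fin n) K d) := by
  induction hdec with
  | @primary Q hprim =>
    obtain ⟨B, hQ⟩ := hmon.exists_isCoordPrimary hprim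
    have hcard : B.card = d := by
      have hrad := hQ.radical_eq (IsAssDecomposable.primary hprim).ne_top
      rw [associatedPrimes.eq_singleton_of_isPrimary hprim] at hdim
      have := hdim _ rfl
      rw [hrad, ringKrullDim_quotient_coordPrime, ringKrullDim_eq_zero_of_field, zero_add] at this
      exact_mod_cast this
    exact hcard ▸ hQ.isWeaklyRegular_esymmSeq
  | @step I i k _ _ hass _ _ ihsup ihcolon =>
    apply isWeaklyRegular_quotient_of_colon_of_sup (x := X i ^ k)
    · exact ihcolon (hmon.colon_span_X_pow i k) fun 𝔭 h𝔭 ↦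
        hdim 𝔭 (associatedPrimes_quotient_colon_subset I _ h𝔭)
    · exact ihsup (hmon.sup (isMonomialIdeal_span_X_pow i k)) fun 𝔭 h𝔭 ↦ hdim 𝔭 (hass ▸ h𝔭).1

theorem exists_natCast_eq_ringKrullDim_quotient (hI : I ≠ ⊤) :
    ∃ d : ℕ, ringKrullDim (MvPolynomial (Fin n) K ⧸ I) = d := by
  have := Ideal.Quotient.nontrivial_iff.2 hI
  have hle : ringKrullDim (MvPolynomial (Fin n) K ⧸ I) ≤ n :=
    (ringKrullDim_quotient_le I).trans (by simp [ringKrullDim_of_isNoetherianRing])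
  have hnonneg := ringKrullDim_nonneg_of_nontrivial (R := MvPolynomial (Fin n) K ⧸ I)
  generalize ringKrullDim (MvPolynomial (Fin n) K ⧸ I) = x at *
  lift x to ℕ∞ using by rintro rfl; simp at hnonneg
  lift x to ℕ using ne_top_of_le_ne_top (ENat.natCast_ne_top n) (by exact_mod_cast hle)
  exact ⟨x, rfl⟩

theorem depth_mIdeal_quotient_eq_of_isWeaklyRegular (hI : I ≤ mIdeal n K) {d : ℕ}
    (hd : ringKrullDim (MvPolynomial (Fin n) K ⧸ I) = d)
    (h : IsWeaklyRegular (MvPolynomial (Fin n) K ⧸ I) (esymmSeq (Fin n) K d)) :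
    depth (mIdeal n K) (MvPolynomial (Fin n) K ⧸ I) = d := by
  have hmem : ∀ r ∈ esymmSeq (Fin n) K d, r ∈ mIdeal n K := fun r hr ↦
    coordPrime_empty (K := K) ▸ mem_coordPrime_empty_of_mem_esymmSeq hr
  exact (depth_quotient_le I _ hd).antisymm <| le_sSup ⟨esymmSeq (Fin n) K d,
    by rw [length_esymmSeq], hmem, isRegular_quotient_of_le mIdeal_ne_top hI hmem h⟩

end AssDecomposable

/-- An unmixed ass-decomposable monomial ideal is Cohen-Macaulay. -/
theorem statement_12 (n : ℕ) (K : Type) [Field K] (I : Ideal (MvPolynomial (Fin n) K))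
    (hmon : IsMonomialIdeal I) (hunm : IsUnmixed I) (hdec : IsAssDecomposable I) :
    IsCMMod n K (MvPolynomial (Fin n) K ⧸ I) := by
  obtain ⟨d, hd⟩ := exists_natCast_eq_ringKrullDim_quotient hdec.ne_top
  have hreg : RingTheory.Sequence.IsWeaklyRegular (MvPolynomial (Fin n) K ⧸ I)
      (esymmSeq (Fin n) K d) :=
    hdec.isWeaklyRegular_esymmSeq hmon fun 𝔭 h𝔭 ↦ (hunm 𝔭 h𝔭).symm.trans hd
  have hdepth := depth_mIdeal_quotient_eq_of_isWeaklyRegular (hmon.le_mIdeal hdec.ne_top) hd hreg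
  rw [IsCMMod, hdepth, mdim, Ideal.annihilator_quotient, hd]
  rfl

end Paper
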